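/- For every t > 0 and ε > 0 the function x ↦ S_ε(x,t) is differentiable on ℝⁿ, and the posterior mean estimate satisfies u_PM(x,t,ε) = x − t ∇ₓS_ε(x,t); equivalently ∇ₓS_ε(x,t) = (x − E_J[y])/t. -/

import Mathlib

open scoped Topology
open Filter MeasureTheory

/-- The integrand `exp(−(‖x−y‖²/(2t) + J(y))/ε)`, with the convention `exp(−∞) = 0`. -/
noncomputable def heatIntegrand (n : ℕ) (J : EuclideanSpace ℝ (Fin n) → EReal)
    (x : EuclideanSpace ℝ (Fin n)) (t ε : ℝ) (y : EuclideanSpace ℝ (Fin n)) : ℝ :=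
  if J y = ⊤ then 0 else Real.exp (-((‖x - y‖ ^ 2 / (2 * t) + (J y).toReal) / ε))

/-- The partition function `Z_J(x,t,ε) = ∫ exp(−(‖x−y‖²/(2t) + J(y))/ε) dy`. -/
noncomputable def partitionFn (n : ℕ) (J : EuclideanSpace ℝ (Fin n) → EReal)
    (x : EuclideanSpace ℝ (Fin n)) (t ε : ℝ) : ℝ :=
  ∫ y, heatIntegrand n J x t ε y

/-- The posterior mean estimate `u_PM(x,t,ε) = E_J[y]`. -/
noncomputable def postMean (n : ℕ) (J : EuclideanSpace ℝ (Fin n) → EReal)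
    (x : EuclideanSpace ℝ (Fin n)) (t ε : ℝ) : EuclideanSpace ℝ (Fin n) :=
  (partitionFn n J x t ε)⁻¹ • ∫ y, heatIntegrand n J x t ε y • y

/-- `S_ε(x,t) = −ε ln((2πtε)^{−n/2} Z_J(x,t,ε))`. -/
noncomputable def viscSol (n : ℕ) (J : EuclideanSpace ℝ (Fin n) → EReal)
    (x : EuclideanSpace ℝ (Fin n)) (t ε : ℝ) : ℝ :=
  -ε * Real.log ((2 * Real.pi * t * ε) ^ (-(n : ℝ) / 2) * partitionFn n J x t ε)

/-! Expanding `‖x - y‖² = ‖x‖² - 2⟪x, y⟫ + ‖y‖²` exhibits the posterior as an exponential family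
in `y` with natural parameter `x / (tε)`, over the base measure `exp(-(‖y‖² / (2t) + J y) / ε)
dy`. Its log-partition function is `ξ ↦ log ∫ exp ⟪ξ, y⟫`, whose gradient is the mean of `y`, and
`S_ε` is `‖x‖² / (2t) - ε log ∫ exp ⟪x / (tε), y⟫` up to an additive constant; hence `∇S_ε = (x -
u_PM) / t`. Differentiation under the integral is legitimate because the Gaussian factor gives the
base measure exponential moments of every order. -/

open Real InnerProductSpace
open scoped RealInnerProductSpace

lemma mul_exp_mul_le_inv_mul_exp_mul {r s : ℝ} (hsr : s < r) (u : ℝ) :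
    u * exp (s * u) ≤ (r - s)⁻¹ * exp (r * u) := by
  have hrs : 0 < r - s := sub_pos.2 hsr
  have hu : u ≤ (r - s)⁻¹ * exp ((r - s) * u) := by
    rw [le_inv_mul_iff₀ hrs]
    linarith [add_one_le_exp ((r - s) * u)]
  calc u * exp (s * u) ≤ (r - s)⁻¹ * exp ((r - s) * u) * exp (s * u) := by gcongr
    _ = (r - s)⁻¹ * exp (r * u) := by rw [mul_assoc, ← exp_add]; ring_nf

section ExponentialFamily

variable {E : Type*} [NormedAddCommGroup E] [InnerProductSpace ℝ E]

lemma exp_inner_le_exp_mul_norm {r : ℝ} {x : E} (hx : ‖x‖ ≤ r) (y : E) :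
    exp ⟪x, y⟫ ≤ exp (r * ‖y‖) :=
  exp_le_exp.2 <| (real_inner_le_norm x y).trans <| by gcongr

lemma norm_exp_inner_smul_le {r s : ℝ} {x : E} (hx : ‖x‖ ≤ s) (hsr : s < r) (y : E) :
    ‖exp ⟪x, y⟫ • y‖ ≤ (r - s)⁻¹ * exp (r * ‖y‖) :=
  calc ‖exp ⟪x, y⟫ • y‖ = exp ⟪x, y⟫ * ‖y‖ := by rw [norm_smul, norm_of_nonneg (exp_nonneg _)]
    _ ≤ ‖y‖ * exp (s * ‖y‖) := by
      rw [mul_comm]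
      exact mul_le_mul_of_nonneg_left (exp_inner_le_exp_mul_norm hx y) (norm_nonneg y)
    _ ≤ (r - s)⁻¹ * exp (r * ‖y‖) := mul_exp_mul_le_inv_mul_exp_mul hsr _

lemma hasGradientAt_exp_inner [CompleteSpace E] (x y : E) :
    HasGradientAt (fun z : E => exp ⟪z, y⟫) (exp ⟪x, y⟫ • y) x := by
  have h : HasFDerivAt (fun z : E => ⟪z, y⟫) (innerSL ℝ y) x := by
    simpa only [real_inner_comm] using! (innerSL ℝ y).hasFDerivAt (x := x)
  rw [hasGradientAt_iff_hasFDerivAt, map_smulₛₗ]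
  exact h.exp

variable [MeasurableSpace E] [OpensMeasurableSpace E] [SecondCountableTopology E]
  {ν : Measure E} {r : ℝ} {x : E}

lemma integrable_exp_inner (hν : Integrable (fun y => exp (r * ‖y‖)) ν) (hx : ‖x‖ ≤ r) :
    Integrable (fun y => exp ⟪x, y⟫) ν :=
  hν.mono' (by fun_prop) <| .of_forall fun y => by
    simpa only [norm_of_nonneg (exp_nonneg _)] using exp_inner_le_exp_mul_norm hx y

lemma integrable_exp_inner_smul (hν : Integrable (fun y => exp (r * ‖y‖)) ν) (hx : ‖x‖ < r) :
    Integrable (fun y => exp ⟪x, y⟫ • y) ν :=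
  (hν.const_mul (r - ‖x‖)⁻¹).mono' (by fun_prop) <| .of_forall <| norm_exp_inner_smul_le le_rfl hx

variable [CompleteSpace E]

theorem hasGradientAt_integral_exp_inner (hν : Integrable (fun y => exp (r * ‖y‖)) ν)
    (hx : ‖x‖ < r) :
    HasGradientAt (fun z => ∫ y, exp ⟪z, y⟫ ∂ν) (∫ y, exp ⟪x, y⟫ • y ∂ν) x := by
  obtain ⟨s, hxs, hsr⟩ := exists_between hx
  have hint := integrable_exp_inner_smul hν hx
  have hswap : ∫ y, toDual ℝ E (exp ⟪x, y⟫ • y) ∂ν = toDual ℝ E (∫ y, exp ⟪x, y⟫ • y ∂ν) :=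
    (innerSL ℝ : E →L[ℝ] StrongDual ℝ E).integral_comp_comm hint
  rw [hasGradientAt_iff_hasFDerivAt, ← hswap]
  refine hasFDerivAt_integral_of_dominated_of_fderiv_le
    (F' := fun z y => toDual ℝ E (exp ⟪z, y⟫ • y))
    (bound := fun y => (r - s)⁻¹ * exp (r * ‖y‖))
    (continuous_norm.continuousAt.eventually_lt_const hxs)
    (.of_forall fun z => by fun_prop)
    (integrable_exp_inner hν hx.le)
    ((toDual ℝ E).continuous.comp_aestronglyMeasurable hint.aestronglyMeasurable)
    (.of_forall fun y z hz => ?_) (hν.const_mul _)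
    (.of_forall fun y z _ => (hasGradientAt_exp_inner z y).hasFDerivAt)
  rw [LinearIsometryEquiv.norm_map]
  exact norm_exp_inner_smul_le (le_of_lt hz) hsr y

theorem hasGradientAt_log_integral_exp_inner [NeZero ν]
    (hν : Integrable (fun y => exp (r * ‖y‖)) ν) (hx : ‖x‖ < r) :
    HasGradientAt (fun z => log (∫ y, exp ⟪z, y⟫ ∂ν))
      ((∫ y, exp ⟪x, y⟫ ∂ν)⁻¹ • ∫ y, exp ⟪x, y⟫ • y ∂ν) x := by
  have hpos := integral_exp_pos (integrable_exp_inner hν hx.le)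
  simpa [hasGradientAt_iff_hasFDerivAt, map_smul] using
    (hasGradientAt_integral_exp_inner hν hx).hasFDerivAt.log hpos.ne'

end ExponentialFamily

lemma integrable_exp_neg_mul_sq_norm_add_mul_norm {E : Type*} [NormedAddCommGroup E]
    [InnerProductSpace ℝ E] [FiniteDimensional ℝ E] [MeasurableSpace E] [BorelSpace E]
    {b : ℝ} (hb : 0 < b) (r : ℝ) :
    Integrable fun y : E => exp (-b * ‖y‖ ^ 2 + r * ‖y‖) := by
  have hgauss : Integrable fun y : E => exp (-(b / 2) * ‖y‖ ^ 2) := by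
    refine .of_integral_ne_zero ?_
    rw [GaussianFourier.integral_rexp_neg_mul_sq_norm (half_pos hb)]
    positivity
  refine (hgauss.const_mul (exp (r ^ 2 / (2 * b)))).mono' (by fun_prop) <| .of_forall fun y => ?_
  have hsq : b / 2 * (‖y‖ - r / b) ^ 2
      = r ^ 2 / (2 * b) + -(b / 2) * ‖y‖ ^ 2 - (-b * ‖y‖ ^ 2 + r * ‖y‖) := by
    field_simp; ring
  have : 0 ≤ b / 2 * (‖y‖ - r / b) ^ 2 := by positivity
  rw [norm_of_nonneg (exp_nonneg _), ← exp_add, exp_le_exp]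
  linarith

section Posterior

variable {n : ℕ} {J : EuclideanSpace ℝ (Fin n) → EReal} {t ε : ℝ}

lemma heatIntegrand_nonneg (x y : EuclideanSpace ℝ (Fin n)) :
    0 ≤ heatIntegrand n J x t ε y := by
  unfold heatIntegrand
  split_ifs <;> positivity

lemma heatIntegrand_pos_iff {x y : EuclideanSpace ℝ (Fin n)} :
    0 < heatIntegrand n J x t ε y ↔ J y ≠ ⊤ := by
  unfold heatIntegrand
  split_ifs with hy <;> simp [hy, exp_pos]

lemma measurable_heatIntegrand (hJ : Measurable J) (x : EuclideanSpace ℝ (Fin n)) :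
    Measurable (heatIntegrand n J x t ε) :=
  .ite (hJ (measurableSet_singleton ⊤)) measurable_const <| by fun_prop

lemma heatIntegrand_eq_mul_exp_inner (x y : EuclideanSpace ℝ (Fin n)) :
    heatIntegrand n J x t ε y = exp (-(‖x‖ ^ 2 / (2 * t * ε))) *
      (heatIntegrand n J 0 t ε y * exp ⟪(t * ε)⁻¹ • x, y⟫) := by
  unfold heatIntegrand
  split_ifs
  · simp
  · rw [← exp_add, ← exp_add, real_inner_smul_left, norm_sub_sq_real, zero_sub, norm_neg]
    ring_nf

lemma heatIntegrand_zero_le {β c : ℝ} {y : EuclideanSpace ℝ (Fin n)}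
    (hJ : ((c - β * ‖y‖ ^ 2 : ℝ) : EReal) ≤ J y) (hε : 0 < ε) :
    heatIntegrand n J 0 t ε y ≤ exp (-c / ε) * exp (-(((2 * t)⁻¹ - β) / ε) * ‖y‖ ^ 2) := by
  unfold heatIntegrand
  split_ifs with hy
  · positivity
  · have hJy : c - β * ‖y‖ ^ 2 ≤ (J y).toReal := EReal.toReal_le_toReal hJ (EReal.coe_ne_bot _) hy
    rw [← exp_add, zero_sub, norm_neg, exp_le_exp]
    calc -((‖y‖ ^ 2 / (2 * t) + (J y).toReal) / ε)
        ≤ -((‖y‖ ^ 2 / (2 * t) + (c - β * ‖y‖ ^ 2)) / ε) := by gcongr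
      _ = -c / ε + -(((2 * t)⁻¹ - β) / ε) * ‖y‖ ^ 2 := by ring

/-- The base measure `exp(-(‖y‖² / (2t) + J y) / ε) dy` of the exponential family formed by the
posteriors, i.e. the unnormalised posterior at `x = 0`; the natural parameter of the posterior
at `x` is `x / (tε)`. -/
noncomputable def posteriorBase (n : ℕ) (J : EuclideanSpace ℝ (Fin n) → EReal) (t ε : ℝ) :
    Measure (EuclideanSpace ℝ (Fin n)) :=
  volume.withDensity fun y => ENNReal.ofReal (heatIntegrand n J 0 t ε y)

lemma posteriorBase_ne_zero (hJ : Measurable J) (hdom : volume {y | J y ≠ ⊤} ≠ 0) :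
    posteriorBase n J t ε ≠ 0 := by
  have hmeas : Measurable fun y => ENNReal.ofReal (heatIntegrand n J 0 t ε y) :=
    (measurable_heatIntegrand hJ 0).ennreal_ofReal
  rw [posteriorBase, Ne, withDensity_eq_zero_iff hmeas.aemeasurable]
  contrapose! hdom
  rw [Filter.EventuallyEq, ae_iff] at hdom
  simpa [heatIntegrand_pos_iff] using hdom

lemma integrable_exp_mul_norm_posteriorBase (hJ : Measurable J) {β c : ℝ}
    (hJ_bound : ∀ y, ((c - β * ‖y‖ ^ 2 : ℝ) : EReal) ≤ J y) (hβ : β < (2 * t)⁻¹) (hε : 0 < ε)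
    (r : ℝ) : Integrable (fun y => exp (r * ‖y‖)) (posteriorBase n J t ε) := by
  have hmeas : Measurable (heatIntegrand n J 0 t ε) := measurable_heatIntegrand hJ 0
  rw [posteriorBase, integrable_withDensity_iff_integrable_smul' hmeas.ennreal_ofReal (by simp)]
  simp only [ENNReal.toReal_ofReal (heatIntegrand_nonneg _ _), smul_eq_mul]
  have hb : 0 < ((2 * t)⁻¹ - β) / ε := div_pos (sub_pos.2 hβ) hε
  refine ((integrable_exp_neg_mul_sq_norm_add_mul_norm hb r).const_mul (exp (-c / ε))).mono'
    (by fun_prop) <| .of_forall fun y => ?_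
  rw [norm_of_nonneg (mul_nonneg (heatIntegrand_nonneg _ _) (exp_nonneg _)), exp_add, ← mul_assoc]
  gcongr
  exact heatIntegrand_zero_le (hJ_bound y) hε

lemma integral_heatIntegrand_smul {F : Type*} [NormedAddCommGroup F] [NormedSpace ℝ F]
    (hJ : Measurable J) (x : EuclideanSpace ℝ (Fin n)) (f : EuclideanSpace ℝ (Fin n) → F) :
    ∫ y, heatIntegrand n J x t ε y • f y = exp (-(‖x‖ ^ 2 / (2 * t * ε))) •
      ∫ y, exp ⟪(t * ε)⁻¹ • x, y⟫ • f y ∂posteriorBase n J t ε := by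
  have hmeas : Measurable (heatIntegrand n J 0 t ε) := measurable_heatIntegrand hJ 0
  rw [posteriorBase, integral_withDensity_eq_integral_toReal_smul hmeas.ennreal_ofReal (by simp),
    ← integral_smul]
  simp only [ENNReal.toReal_ofReal (heatIntegrand_nonneg _ _), smul_smul,
    heatIntegrand_eq_mul_exp_inner x]

lemma partitionFn_eq_exp_mul_integral (hJ : Measurable J) (x : EuclideanSpace ℝ (Fin n)) :
    partitionFn n J x t ε = exp (-(‖x‖ ^ 2 / (2 * t * ε))) *
      ∫ y, exp ⟪(t * ε)⁻¹ • x, y⟫ ∂posteriorBase n J t ε := by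
  simpa [partitionFn] using integral_heatIntegrand_smul hJ x fun _ => (1 : ℝ)

lemma postMean_eq_inv_smul_integral (hJ : Measurable J) (x : EuclideanSpace ℝ (Fin n)) :
    postMean n J x t ε = (∫ y, exp ⟪(t * ε)⁻¹ • x, y⟫ ∂posteriorBase n J t ε)⁻¹ •
      ∫ y, exp ⟪(t * ε)⁻¹ • x, y⟫ • y ∂posteriorBase n J t ε := by
  rw [postMean, partitionFn_eq_exp_mul_integral hJ, integral_heatIntegrand_smul hJ, mul_inv_rev,
    mul_smul, inv_smul_smul₀ (exp_ne_zero _)]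

lemma viscSol_eq_sub_log_integral (hJ : Measurable J) (ht : 0 < t) (hε : 0 < ε)
    (x : EuclideanSpace ℝ (Fin n))
    (hpos : 0 < ∫ y, exp ⟪(t * ε)⁻¹ • x, y⟫ ∂posteriorBase n J t ε) :
    viscSol n J x t ε = (2 * t)⁻¹ * ‖x‖ ^ 2
      - ε * log (∫ y, exp ⟪(t * ε)⁻¹ • x, y⟫ ∂posteriorBase n J t ε)
      - ε * log ((2 * π * t * ε) ^ (-(n : ℝ) / 2)) := by
  have hc : 0 < (2 * π * t * ε) ^ (-(n : ℝ) / 2) := by positivity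
  rw [viscSol, partitionFn_eq_exp_mul_integral hJ, log_mul hc.ne' (by positivity),
    log_mul (exp_ne_zero _) hpos.ne', log_exp]
  field_simp
  ring

theorem hasGradientAt_viscSol (hJ : Measurable J) (hdom : volume {y | J y ≠ ⊤} ≠ 0) {β c : ℝ}
    (hJ_bound : ∀ y, ((c - β * ‖y‖ ^ 2 : ℝ) : EReal) ≤ J y) (hβ : β < (2 * t)⁻¹)
    (ht : 0 < t) (hε : 0 < ε) (x : EuclideanSpace ℝ (Fin n)) :
    HasGradientAt (fun z => viscSol n J z t ε) (t⁻¹ • (x - postMean n J x t ε)) x := by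
  have hint := integrable_exp_mul_norm_posteriorBase hJ hJ_bound hβ hε
  have : NeZero (posteriorBase n J t ε) := ⟨posteriorBase_ne_zero hJ hdom⟩
  have hlog := (hasGradientAt_log_integral_exp_inner (hint _)
    (lt_add_one ‖(t * ε)⁻¹ • x‖)).hasFDerivAt
  rw [← postMean_eq_inv_smul_integral hJ] at hlog
  have hsq : HasFDerivAt (fun z : EuclideanSpace ℝ (Fin n) => ‖z‖ ^ 2) (2 • innerSL ℝ x) x :=
    (hasStrictFDerivAt_norm_sq x).hasFDerivAt
  have hscale := (hasFDerivAt_id (𝕜 := ℝ) x).const_smul (t * ε)⁻¹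
  have hderiv := ((hsq.const_mul (2 * t)⁻¹).sub ((hlog.comp x hscale).const_mul ε)).sub_const
    (ε * log ((2 * π * t * ε) ^ (-(n : ℝ) / 2)))
  rw [hasGradientAt_iff_hasFDerivAt]
  refine (hderiv.congr_fderiv ?_).congr_of_eventuallyEq <| .of_forall fun z =>
    viscSol_eq_sub_log_integral hJ ht hε z (integral_exp_pos (integrable_exp_inner (hint _) le_rfl))
  ext v
  simp only [mul_inv_rev, ContinuousLinearMap.comp_smulₛₗ, RingHom.id_apply,
    ContinuousLinearMap.comp_id, sub_apply, smul_apply, coe_innerSL_apply, nsmul_eq_mul,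
    Nat.cast_ofNat, smul_eq_mul, toDual_apply_apply, map_smul, map_sub]
  field_simp

theorem postMean_eq_gradient_viscSol_general (hJ : Measurable J)
    (hdom : volume {y | J y ≠ ⊤} ≠ 0) {β c : ℝ}
    (hJ_bound : ∀ y, ((c - β * ‖y‖ ^ 2 : ℝ) : EReal) ≤ J y) (hβ : β < (2 * t)⁻¹)
    (ht : 0 < t) (hε : 0 < ε) :
    (∀ x, DifferentiableAt ℝ (fun z => viscSol n J z t ε) x) ∧
      ∀ x, postMean n J x t ε = x - t • gradient (fun z => viscSol n J z t ε) x := by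
  have hgrad := hasGradientAt_viscSol hJ hdom hJ_bound hβ ht hε
  refine ⟨fun x => (hgrad x).differentiableAt, fun x => ?_⟩
  rw [(hgrad x).gradient, smul_inv_smul₀ ht.ne', sub_sub_cancel]

end Posterior

/-- For every `t > 0` and `ε > 0`, `x ↦ S_ε(x,t)` is differentiable on `ℝⁿ` and the
posterior mean estimate satisfies `u_PM(x,t,ε) = x − t ∇ₓS_ε(x,t)`. -/
theorem postMean_eq_gradient_viscSol (n : ℕ) (hn : 1 ≤ n)
    (J : EuclideanSpace ℝ (Fin n) → EReal)
    (hJ_proper_bot : ∀ y, J y ≠ ⊥)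
    (hJ_lsc : LowerSemicontinuous J)
    (hJ_convex : ∀ y₁ y₂ : EuclideanSpace ℝ (Fin n), ∀ a b : ℝ, 0 ≤ a → 0 ≤ b → a + b = 1 →
      J (a • y₁ + b • y₂) ≤ (a : EReal) * J y₁ + (b : EReal) * J y₂)
    (hJ_int : (interior {y : EuclideanSpace ℝ (Fin n) | J y ≠ ⊤}).Nonempty)
    (hJ_inf : (⨅ y : EuclideanSpace ℝ (Fin n), J y) = (0 : EReal))
    (t ε : ℝ) (ht : 0 < t) (hε : 0 < ε) :
    (∀ x : EuclideanSpace ℝ (Fin n),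
      DifferentiableAt ℝ (fun z : EuclideanSpace ℝ (Fin n) => viscSol n J z t ε) x) ∧
    (∀ x : EuclideanSpace ℝ (Fin n),
      postMean n J x t ε
        = x - t • gradient (fun z : EuclideanSpace ℝ (Fin n) => viscSol n J z t ε) x) := by
  have hdom : volume {y | J y ≠ ⊤} ≠ 0 :=
    (Measure.measure_pos_of_nonempty_interior volume hJ_int).ne'
  exact postMean_eq_gradient_viscSol_general hJ_lsc.measurable hdom (β := 0) (c := 0)
    (fun y => by simpa [hJ_inf] using iInf_le J y) (by positivity) ht hε
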